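/- arXiv:1112.4780 — 2 statements merged into one kernel-verified Lean document; each statement's English description precedes it below -/
import Mathlib

section
/- Let a ∈ ℂ ∖ {0}. If the critical point −1 belongs to E₀(a), then the basin Ω(a) equals E₀(a) ∪ E_∞(a); that is, E₀(a) and E_∞(a) are the only connected components of Ω(a). -/
/-!
Write `σ(z) = -2 - z` (`reflect` below), so that the fibres of `G_a` are exactly the orbits of `σ`. The map `G_a` is
continuous and surjective on a compact Hausdorff space, hence closed, and the saturation of an open
set `U` is `U ∪ σ U`, so `G_a` is also open (`isOpenMap_Ga`).

For an open and closed map, if the preimage of a connected set `C` is split into two relatively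
clopen nonempty parts, then each part surjects onto `C`. Hence `f ⁻¹ C` is connected as soon as some
connected subset of it contains a whole fibre over a point of `C` (`preimage_preconnected`).

* The fibre over `0` is `{∞}`, so `G_a⁻¹(E₀)` is connected and lies in `E_∞`.
* If `-1 ∈ E₀`, then `σ E₀` is a connected subset of the basin through `σ(-1) = -1`, so
  `σ E₀ ⊆ E₀` and `-2 = σ(0) ∈ E₀`. The fibre `{0, -2}` over `∞` thus lies in the connected set
  `E₀ ⊆ G_a⁻¹(E_∞)`, so `G_a⁻¹(E_∞)` is connected and lies in `E₀`.

Therefore `E₀ ∪ E_∞` is backward invariant. Every orbit in the basin enters a small disc about `0`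
contained in `E₀`, on which `G_a²` is a contraction towards `0`, so the basin is `E₀ ∪ E_∞`.
-/

open Filter Topology OnePoint

/-- The quadratic rational map `g_a(z) = a / (z ^ 2 + 2 * z)` viewed as a self-map of the
Riemann sphere `ℂ̂ = OnePoint ℂ`, with `G_a ∞ = 0` and `G_a 0 = G_a (-2) = ∞`. -/
noncomputable def Ga (a : ℂ) : OnePoint ℂ → OnePoint ℂ :=
  OnePoint.rec ((0 : ℂ) : OnePoint ℂ)
    (fun w => if w ^ 2 + 2 * w = 0 then ∞ else ((a / (w ^ 2 + 2 * w) : ℂ) : OnePoint ℂ))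

/-- The attracting basin `Ω(a)` of the superattracting 2-cycle `{0, ∞}` of `G_a`. -/
noncomputable def basin (a : ℂ) : Set (OnePoint ℂ) :=
  {z | Tendsto (fun n => (Ga a)^[2 * n] z) atTop (𝓝 ((0 : ℂ) : OnePoint ℂ)) ∨
       Tendsto (fun n => (Ga a)^[2 * n] z) atTop (𝓝 (∞ : OnePoint ℂ))}

/-- `E₀(a)`: the connected component of the basin `Ω(a)` containing `0`. -/
noncomputable def E0 (a : ℂ) : Set (OnePoint ℂ) :=
  connectedComponentIn (basin a) ((0 : ℂ) : OnePoint ℂ)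

/-- `E_∞(a)`: the connected component of the basin `Ω(a)` containing `∞`. -/
noncomputable def Einf (a : ℂ) : Set (OnePoint ℂ) :=
  connectedComponentIn (basin a) (∞ : OnePoint ℂ)

/-! ### Preimages of connected sets under open and closed maps -/

/-- If the preimage of a preconnected set `C` under an open and closed map contains a
preconnected set that includes an entire fibre over a point of `C`, then it is preconnected. -/
lemma preimage_preconnected {X Y : Type*} [TopologicalSpace X] [TopologicalSpace Y] {f : X → Y}
    (ho : IsOpenMap f) (hc : IsClosedMap f) {C : Set Y} (hC : IsPreconnected C)
    {P : Set X} (hP : IsPreconnected P) (hPD : P ⊆ f ⁻¹' C) {c : Y} (hcC : c ∈ C)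
    (hfib : ∀ x, f x = c → x ∈ P) : IsPreconnected (f ⁻¹' C) := by
  -- each part of a separation of the preimage surjects onto `C`
  have key : ∀ U V : Set X, IsOpen U → IsOpen V → f ⁻¹' C ⊆ U ∪ V →
      (f ⁻¹' C ∩ U).Nonempty → ¬ (f ⁻¹' C ∩ (U ∩ V)).Nonempty → C ⊆ f '' U := by
    intro U V hU hV hUV ⟨x, hxC, hxU⟩ hd y hy
    by_contra hyU
    obtain ⟨y', hy', ⟨u, huU, rfl⟩, hyF⟩ := hC (f '' U) (f '' Vᶜ)ᶜ (ho U hU)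
      (hc _ hV.isClosed_compl).isOpen_compl
      (by
        intro t ht
        by_cases htF : t ∈ f '' Vᶜ
        · obtain ⟨v, hv, rfl⟩ := htF
          exact Or.inl ⟨v, (hUV ht).resolve_right hv, rfl⟩
        · exact Or.inr htF)
      ⟨f x, hxC, x, hxU, rfl⟩
      ⟨y, hy, by
        rintro ⟨v, hv, rfl⟩
        exact hyU ⟨v, (hUV hy).resolve_right hv, rfl⟩⟩
    refine hyF ⟨u, fun huV => hd ⟨u, hy', huU, huV⟩, rfl⟩
  intro U V hU hV hUV hnU hnV
  by_contra hd
  obtain ⟨u, hu, huc⟩ := key U V hU hV hUV hnU hd hcC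
  obtain ⟨v, hv, hvc⟩ := key V U hV hU (by rwa [Set.union_comm]) hnV
    (by rwa [Set.inter_comm V U]) hcC
  obtain ⟨p, hp, hpUV⟩ := hP U V hU hV (hPD.trans hUV) ⟨u, hfib u huc, hu⟩ ⟨v, hfib v hvc, hv⟩
  exact hd ⟨p, hPD hp, hpUV⟩

/-! ### The map `G_a` and its symmetry -/

lemma Ga_infty (a : ℂ) : Ga a ∞ = ((0 : ℂ) : OnePoint ℂ) := rfl

lemma Ga_coe (a w : ℂ) : Ga a (w : OnePoint ℂ) =
    if w ^ 2 + 2 * w = 0 then ∞ else ((a / (w ^ 2 + 2 * w) : ℂ) : OnePoint ℂ) := rfl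

lemma Ga_zero (a : ℂ) : Ga a ((0 : ℂ) : OnePoint ℂ) = ∞ := by simp [Ga_coe]

/-- The map `u ↦ a / u` from `ℂ` to the Riemann sphere, with value `∞` at `0`. -/
noncomputable def divSphere (a u : ℂ) : OnePoint ℂ :=
  if u = 0 then ∞ else ((a / u : ℂ) : OnePoint ℂ)

lemma continuous_divSphere {a : ℂ} (ha : a ≠ 0) : Continuous (divSphere a) := by
  rw [continuous_iff_continuousAt]
  intro u
  by_cases hu : u = 0
  · subst hu
    rw [continuousAt_iff_punctured_nhds]
    have h1 : Tendsto (fun u : ℂ => a / u) (𝓝[≠] 0) (Bornology.cobounded ℂ) := by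
      rw [← tendsto_norm_atTop_iff_cobounded]
      simp only [div_eq_mul_inv, norm_mul]
      exact (tendsto_norm_cobounded_atTop.comp tendsto_inv₀_nhdsNE_zero).const_mul_atTop
        (norm_pos_iff.2 ha)
    have h2 : Tendsto (fun z : ℂ => (z : OnePoint ℂ)) (Bornology.cobounded ℂ) (𝓝 ∞) := by
      rw [Metric.cobounded_eq_cocompact, ← coclosedCompact_eq_cocompact]
      exact OnePoint.tendsto_coe_infty
    have h3 : divSphere a 0 = ∞ := by simp [divSphere]
    rw [h3]
    refine (h2.comp h1).congr' ?_
    filter_upwards [self_mem_nhdsWithin] with v hv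
    have : v ≠ 0 := hv
    simp [divSphere, this]
  · have h1 : ContinuousAt (fun u : ℂ => ((a / u : ℂ) : OnePoint ℂ)) u :=
      OnePoint.continuous_coe.continuousAt.comp (continuousAt_const.div continuousAt_id hu)
    refine h1.congr ?_
    filter_upwards [isOpen_ne.mem_nhds hu] with v hv
    have : v ≠ 0 := hv
    simp [divSphere, this]

lemma continuous_Ga {a : ℂ} (ha : a ≠ 0) : Continuous (Ga a) := by
  rw [continuous_iff_continuousAt]
  intro z
  induction z using OnePoint.rec with
  | infty =>
    rw [OnePoint.continuousAt_infty', Ga_infty, coclosedCompact_eq_cocompact,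
      ← Metric.cobounded_eq_cocompact]
    have hp : Tendsto (fun w : ℂ => w ^ 2 + 2 * w) (Bornology.cobounded ℂ)
        (Bornology.cobounded ℂ) := by
      rw [← tendsto_norm_atTop_iff_cobounded]
      have h1 : Tendsto (fun w : ℂ => ‖w‖ * (‖w‖ - 2)) (Bornology.cobounded ℂ) atTop :=
        tendsto_norm_cobounded_atTop.atTop_mul_atTop₀
          (tendsto_atTop_add_const_right _ (-2) tendsto_norm_cobounded_atTop)
      refine tendsto_atTop_mono (fun w => ?_) h1
      have : w ^ 2 + 2 * w = w * (w - (-2)) := by ring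
      rw [this, norm_mul]
      refine mul_le_mul_of_nonneg_left ?_ (norm_nonneg _)
      simpa using norm_sub_norm_le w (-2)
    have hinv : Tendsto (fun u : ℂ => ((a / u : ℂ) : OnePoint ℂ)) (Bornology.cobounded ℂ)
        (𝓝 ((0 : ℂ) : OnePoint ℂ)) := by
      refine (OnePoint.continuous_coe.tendsto (0 : ℂ)).comp ?_
      have := (tendsto_inv₀_cobounded (α := ℂ)).const_mul a
      rw [mul_zero] at this
      exact this.congr fun u => (div_eq_mul_inv a u).symm
    have hJ : Tendsto (divSphere a) (Bornology.cobounded ℂ) (𝓝 ((0 : ℂ) : OnePoint ℂ)) := by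
      refine hinv.congr' ?_
      filter_upwards [Bornology.eventually_ne_cobounded (0 : ℂ)] with v hv
      simp [divSphere, hv]
    exact hJ.comp hp
  | coe w =>
    rw [OnePoint.continuousAt_coe]
    have : Continuous (fun w : ℂ => divSphere a (w ^ 2 + 2 * w)) :=
      (continuous_divSphere ha).comp (by fun_prop)
    exact this.continuousAt

/-- The deck involution `z ↦ -2 - z` of `G_a`, fixing `∞`. -/
noncomputable def reflect : OnePoint ℂ → OnePoint ℂ :=
  OnePoint.map fun w : ℂ => -2 - w

lemma reflect_coe (w : ℂ) : reflect (w : OnePoint ℂ) = ((-2 - w : ℂ) : OnePoint ℂ) := rfl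

lemma continuous_reflect : Continuous reflect :=
  OnePoint.continuous_map (by fun_prop) <| by
    rw [coclosedCompact_eq_cocompact]
    exact (Homeomorph.subLeft (-2 : ℂ)).isClosedEmbedding.tendsto_cocompact

lemma Ga_reflect (a : ℂ) (z : OnePoint ℂ) : Ga a (reflect z) = Ga a z := by
  induction z using OnePoint.rec with
  | infty => rfl
  | coe w =>
    have : (-2 - w) ^ 2 + 2 * (-2 - w) = w ^ 2 + 2 * w := by ring
    rw [reflect_coe, Ga_coe, Ga_coe, this]

lemma eq_infty_of_Ga_eq_zero {a : ℂ} (ha : a ≠ 0) {z : OnePoint ℂ}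
    (h : Ga a z = ((0 : ℂ) : OnePoint ℂ)) : z = ∞ := by
  induction z using OnePoint.rec with
  | infty => rfl
  | coe w =>
    rw [Ga_coe] at h
    split_ifs at h with hw
    · exact absurd h (OnePoint.infty_ne_coe _)
    · rw [OnePoint.coe_eq_coe] at h
      exact absurd h (div_ne_zero ha hw)

/-- The fibres of `G_a` are the orbits of the deck involution. -/
lemma eq_or_eq_reflect {a : ℂ} (ha : a ≠ 0) {x y : OnePoint ℂ} (h : Ga a x = Ga a y) :
    x = y ∨ x = reflect y := by
  induction x using OnePoint.rec with
  | infty => exact Or.inl (eq_infty_of_Ga_eq_zero ha (h.symm.trans (Ga_infty a))).symm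
  | coe x =>
    induction y using OnePoint.rec with
    | infty => exact Or.inl (eq_infty_of_Ga_eq_zero ha (h.trans (Ga_infty a)))
    | coe y =>
      have hq : x ^ 2 + 2 * x = y ^ 2 + 2 * y := by
        rw [Ga_coe, Ga_coe] at h
        split_ifs at h with hx hy hy
        · rw [hx, hy]
        · exact absurd h (OnePoint.infty_ne_coe _)
        · exact absurd h (OnePoint.coe_ne_infty _)
        · rw [OnePoint.coe_eq_coe, div_eq_div_iff hx hy] at h
          exact (mul_left_cancel₀ ha h).symm
      have hf : (x - y) * (x - (-2 - y)) = 0 := by linear_combination hq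
      rcases mul_eq_zero.1 hf with h0 | h0
      · exact Or.inl (by rw [sub_eq_zero.1 h0])
      · exact Or.inr (by rw [reflect_coe, sub_eq_zero.1 h0])

lemma surjective_Ga {a : ℂ} (ha : a ≠ 0) : Function.Surjective (Ga a) := by
  intro y
  induction y using OnePoint.rec with
  | infty => exact ⟨_, Ga_zero a⟩
  | coe y =>
    by_cases hy : y = 0
    · exact ⟨∞, by rw [hy, Ga_infty]⟩
    · obtain ⟨s, hs⟩ := IsAlgClosed.exists_pow_nat_eq (1 + a / y) two_pos
      refine ⟨((s - 1 : ℂ) : OnePoint ℂ), ?_⟩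
      have hw : (s - 1) ^ 2 + 2 * (s - 1) = a / y := by linear_combination hs
      rw [Ga_coe, hw, if_neg (div_ne_zero ha hy), div_div_cancel₀ ha]

lemma isClosedMap_Ga {a : ℂ} (ha : a ≠ 0) : IsClosedMap (Ga a) := (continuous_Ga ha).isClosedMap

lemma isOpenMap_Ga {a : ℂ} (ha : a ≠ 0) : IsOpenMap (Ga a) := by
  intro U hU
  have hq := (isClosedMap_Ga ha).isQuotientMap (continuous_Ga ha) (surjective_Ga ha)
  rw [← hq.isOpen_preimage]
  -- the saturation of `U` is the union of `U` and its mirror image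
  have : Ga a ⁻¹' (Ga a '' U) = U ∪ reflect ⁻¹' U := by
    ext z
    constructor
    · rintro ⟨u, hu, huz⟩
      rcases eq_or_eq_reflect ha huz with rfl | rfl
      · exact Or.inl hu
      · exact Or.inr hu
    · rintro (hz | hz)
      · exact ⟨z, hz, rfl⟩
      · exact ⟨reflect z, hz, Ga_reflect a z⟩
  rw [this]
  exact hU.union (hU.preimage continuous_reflect)

/-! ### Invariance of the basin -/

lemma Ga_mem_basin {a : ℂ} (ha : a ≠ 0) {z : OnePoint ℂ} : Ga a z ∈ basin a ↔ z ∈ basin a := by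
  have hc := continuous_Ga ha
  have e1 : ∀ n, (Ga a)^[2 * n] (Ga a z) = Ga a ((Ga a)^[2 * n] z) := fun n => by
    rw [← Function.iterate_succ_apply, Function.iterate_succ_apply']
  have e2 : ∀ n, Ga a ((Ga a)^[2 * n] (Ga a z)) = (Ga a)^[2 * (n + 1)] z := fun n => by
    rw [← Function.iterate_succ_apply' (Ga a), ← Function.iterate_succ_apply (Ga a)]
    rfl
  constructor
  · rintro (h | h)
    · refine Or.inr ((tendsto_add_atTop_iff_nat 1).1 ?_)
      have := (hc.tendsto _).comp h
      rw [Ga_zero] at this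
      exact this.congr e2
    · refine Or.inl ((tendsto_add_atTop_iff_nat 1).1 ?_)
      have := (hc.tendsto _).comp h
      rw [Ga_infty] at this
      exact this.congr e2
  · rintro (h | h)
    · have := (hc.tendsto _).comp h
      rw [Ga_zero] at this
      exact Or.inr (this.congr fun n => (e1 n).symm)
    · have := (hc.tendsto _).comp h
      rw [Ga_infty] at this
      exact Or.inl (this.congr fun n => (e1 n).symm)

lemma reflect_mem_basin {a : ℂ} (ha : a ≠ 0) {z : OnePoint ℂ} (hz : z ∈ basin a) :
    reflect z ∈ basin a := by
  rwa [← Ga_mem_basin ha, Ga_reflect, Ga_mem_basin ha]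

lemma zero_mem_basin (a : ℂ) : ((0 : ℂ) : OnePoint ℂ) ∈ basin a := by
  have h2 : (Ga a)^[2] ((0 : ℂ) : OnePoint ℂ) = ((0 : ℂ) : OnePoint ℂ) := by
    simp [Ga_zero, Ga_infty]
  refine Or.inl (tendsto_const_nhds.congr fun n => ?_)
  rw [Function.iterate_mul, Function.iterate_fixed h2]

lemma infty_mem_basin {a : ℂ} (ha : a ≠ 0) : (∞ : OnePoint ℂ) ∈ basin a := by
  rw [← Ga_mem_basin ha, Ga_infty]
  exact zero_mem_basin a

/-! ### A disc about `0` in `E₀` -/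

/-- Near `0` the second iterate of `G_a` is `z ↦ u² / (a + 2u)` with `u = z² + 2z`, which at least
halves the modulus of `z`. -/
lemma Ga_Ga_contract {a : ℂ} (ha : a ≠ 0) : ∃ r > 0, ∀ z : ℂ, ‖z‖ < r →
    ∃ w : ℂ, Ga a (Ga a (z : OnePoint ℂ)) = (w : OnePoint ℂ) ∧ ‖w‖ ≤ ‖z‖ / 2 := by
  have hA : 0 < ‖a‖ := norm_pos_iff.2 ha
  refine ⟨min 1 (‖a‖ / 36), by positivity, fun z hz => ?_⟩
  have hz1 : ‖z‖ < 1 := hz.trans_le (min_le_left _ _)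
  have hz2 : ‖z‖ < ‖a‖ / 36 := hz.trans_le (min_le_right _ _)
  set u : ℂ := z ^ 2 + 2 * z with hu
  have hun : ‖u‖ ≤ 3 * ‖z‖ := by
    calc ‖u‖ ≤ ‖z ^ 2‖ + ‖2 * z‖ := norm_add_le _ _
      _ = ‖z‖ ^ 2 + 2 * ‖z‖ := by simp
      _ ≤ 3 * ‖z‖ := by nlinarith [norm_nonneg z]
  by_cases hu0 : u = 0
  · refine ⟨0, ?_, by rw [norm_zero]; positivity⟩
    rw [Ga_coe, if_pos hu0, Ga_infty]
  have hden : ‖a‖ / 2 ≤ ‖a + 2 * u‖ := by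
    have h1 : ‖a‖ ≤ ‖a + 2 * u‖ + ‖2 * u‖ := by
      simpa using norm_sub_le (a + 2 * u) (2 * u)
    have h2 : ‖2 * u‖ = 2 * ‖u‖ := by simp
    linarith
  have hden0 : a + 2 * u ≠ 0 := by
    rw [← norm_pos_iff]; linarith
  have hv : (a / u) ^ 2 + 2 * (a / u) = a * (a + 2 * u) / u ^ 2 := by
    field_simp
  refine ⟨u ^ 2 / (a + 2 * u), ?_, ?_⟩
  · rw [Ga_coe, if_neg hu0, Ga_coe, ← hu, hv, if_neg
      (div_ne_zero (mul_ne_zero ha hden0) (pow_ne_zero 2 hu0))]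
    congr 1
    field_simp
  · rw [norm_div, norm_pow, div_le_iff₀ (by linarith)]
    have h1 : ‖u‖ ^ 2 ≤ 9 * ‖z‖ * ‖z‖ := by nlinarith [norm_nonneg u]
    have h2 : 9 * ‖z‖ * ‖z‖ ≤ ‖z‖ / 2 * (‖a‖ / 2) := by nlinarith [norm_nonneg z]
    exact h1.trans (h2.trans (mul_le_mul_of_nonneg_left hden (by positivity)))

lemma E0_mem_nhds {a : ℂ} (ha : a ≠ 0) : E0 a ∈ 𝓝 ((0 : ℂ) : OnePoint ℂ) := by
  obtain ⟨r, hr, hcon⟩ := Ga_Ga_contract ha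
  have hb : ∀ z : ℂ, ‖z‖ < r → (z : OnePoint ℂ) ∈ basin a := by
    intro z hz
    have hit : ∀ n : ℕ, ∃ w : ℂ, (Ga a)^[2 * n] (z : OnePoint ℂ) = (w : OnePoint ℂ) ∧
        ‖w‖ ≤ ‖z‖ * (1 / 2) ^ n := by
      intro n
      induction n with
      | zero => exact ⟨z, rfl, by simp⟩
      | succ n ih =>
        obtain ⟨w, hw, hwn⟩ := ih
        have hle : ‖z‖ * (1 / 2 : ℝ) ^ n ≤ ‖z‖ :=
          mul_le_of_le_one_right (norm_nonneg z) (pow_le_one₀ (by norm_num) (by norm_num))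
        obtain ⟨w', hw', hwn'⟩ := hcon w ((hwn.trans hle).trans_lt hz)
        refine ⟨w', ?_, ?_⟩
        · rw [← hw', ← hw, ← Function.iterate_succ_apply' (Ga a),
            ← Function.iterate_succ_apply' (Ga a)]
          rfl
        · rw [pow_succ]; linarith
    choose w hw hwn using hit
    have hw0 : Tendsto w atTop (𝓝 0) := by
      refine squeeze_zero_norm hwn ?_
      simpa using (tendsto_pow_atTop_nhds_zero_of_lt_one (r := (1 / 2 : ℝ))
        (by norm_num) (by norm_num)).const_mul ‖z‖
    exact Or.inl (((OnePoint.continuous_coe.tendsto (0 : ℂ)).comp hw0).congr fun n => (hw n).symm)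
  have hsub : ((↑) : ℂ → OnePoint ℂ) '' Metric.ball 0 r ⊆ E0 a := by
    refine IsPreconnected.subset_connectedComponentIn ?_ ⟨0, Metric.mem_ball_self hr, rfl⟩ ?_
    · exact (convex_ball (0 : ℂ) r).isPreconnected.image _ OnePoint.continuous_coe.continuousOn
    · rintro _ ⟨z, hz, rfl⟩
      exact hb z (by simpa using hz)
  exact mem_of_superset
    (OnePoint.isOpenEmbedding_coe.isOpenMap.image_mem_nhds (Metric.ball_mem_nhds 0 hr)) hsub

/-! ### Backward invariance of `E₀ ∪ E_∞` -/

lemma zero_mem_E0 (a : ℂ) : ((0 : ℂ) : OnePoint ℂ) ∈ E0 a :=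
  mem_connectedComponentIn (zero_mem_basin a)

lemma infty_mem_Einf {a : ℂ} (ha : a ≠ 0) : (∞ : OnePoint ℂ) ∈ Einf a :=
  mem_connectedComponentIn (infty_mem_basin ha)

lemma E0_subset_preimage {a : ℂ} (ha : a ≠ 0) : E0 a ⊆ Ga a ⁻¹' Einf a := by
  rw [← Set.image_subset_iff]
  refine IsPreconnected.subset_connectedComponentIn
    (isPreconnected_connectedComponentIn.image _ (continuous_Ga ha).continuousOn)
    ⟨_, zero_mem_E0 a, Ga_zero a⟩ ?_
  rintro _ ⟨z, hz, rfl⟩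
  exact (Ga_mem_basin ha).2 (connectedComponentIn_subset _ _ hz)

lemma preimage_E0_subset {a : ℂ} (ha : a ≠ 0) : Ga a ⁻¹' E0 a ⊆ Einf a := by
  have hinf : Ga a ∞ ∈ E0 a := zero_mem_E0 a
  have hpre : IsPreconnected (Ga a ⁻¹' E0 a) :=
    preimage_preconnected (isOpenMap_Ga ha) (isClosedMap_Ga ha)
      isPreconnected_connectedComponentIn (P := {∞}) isPreconnected_singleton
      (Set.singleton_subset_iff.2 hinf) (zero_mem_E0 a)
      (fun _ hx => eq_infty_of_Ga_eq_zero ha hx)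
  exact hpre.subset_connectedComponentIn hinf
    fun z hz => (Ga_mem_basin ha).1 (connectedComponentIn_subset _ _ hz)

/-- A component `E₀` through the fixed point `-1` of the deck involution is invariant under it, so
it contains the second pole `-2`. -/
lemma neg_two_mem_E0 {a : ℂ} (ha : a ≠ 0) (h : ((-1 : ℂ) : OnePoint ℂ) ∈ E0 a) :
    ((-2 : ℂ) : OnePoint ℂ) ∈ E0 a := by
  have hsub : reflect '' E0 a ⊆ connectedComponentIn (basin a) ((-1 : ℂ) : OnePoint ℂ) := by
    refine IsPreconnected.subset_connectedComponentIn
      (isPreconnected_connectedComponentIn.image _ continuous_reflect.continuousOn)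
      ⟨_, h, by rw [reflect_coe]; norm_num⟩ ?_
    rintro _ ⟨z, hz, rfl⟩
    exact reflect_mem_basin ha (connectedComponentIn_subset _ _ hz)
  rw [← connectedComponentIn_eq h] at hsub
  exact hsub ⟨_, zero_mem_E0 a, by rw [reflect_coe, sub_zero]⟩

lemma preimage_Einf_subset {a : ℂ} (ha : a ≠ 0) (h : ((-1 : ℂ) : OnePoint ℂ) ∈ E0 a) :
    Ga a ⁻¹' Einf a ⊆ E0 a := by
  have hpre : IsPreconnected (Ga a ⁻¹' Einf a) := by
    refine preimage_preconnected (isOpenMap_Ga ha) (isClosedMap_Ga ha)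
      isPreconnected_connectedComponentIn (P := E0 a) isPreconnected_connectedComponentIn
      (E0_subset_preimage ha) (infty_mem_Einf ha) fun x hx => ?_
    rcases eq_or_eq_reflect ha (hx.trans (Ga_zero a).symm) with rfl | rfl
    · exact zero_mem_E0 a
    · rw [reflect_coe, sub_zero]
      exact neg_two_mem_E0 ha h
  exact hpre.subset_connectedComponentIn (E0_subset_preimage ha (zero_mem_E0 a))
    fun z hz => (Ga_mem_basin ha).1 (connectedComponentIn_subset _ _ hz)

/-- If `-1` lies in `E₀(a)`, then a point whose forward orbit meets `E₀ ∪ E_∞` lies in it. -/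
lemma mem_of_iterate_mem {a : ℂ} (ha : a ≠ 0) (h : ((-1 : ℂ) : OnePoint ℂ) ∈ E0 a) (n : ℕ) :
    ∀ z, (Ga a)^[n] z ∈ E0 a ∪ Einf a → z ∈ E0 a ∪ Einf a := by
  induction n with
  | zero => exact fun z hz => hz
  | succ n ih =>
    intro z hz
    rcases ih (Ga a z) hz with hz' | hz'
    · exact Or.inr (preimage_E0_subset ha hz')
    · exact Or.inl (preimage_Einf_subset ha h hz')

/-- If `-1` lies in `E₀(a)`, then the basin `Ω(a)` consists of just the
two components `E₀(a)` and `E_∞(a)`. -/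
theorem basin_eq_of_crit_mem_E0 (a : ℂ) (ha : a ≠ 0)
    (h : ((-1 : ℂ) : OnePoint ℂ) ∈ E0 a) :
    basin a = E0 a ∪ Einf a := by
  refine Set.Subset.antisymm ?_
    (Set.union_subset (connectedComponentIn_subset _ _) (connectedComponentIn_subset _ _))
  -- an orbit whose even iterates tend to `0` enters the neighbourhood `E₀` of `0`
  have h0 : ∀ z, Tendsto (fun n => (Ga a)^[2 * n] z) atTop (𝓝 ((0 : ℂ) : OnePoint ℂ)) →
      z ∈ E0 a ∪ Einf a := by
    intro z hz
    obtain ⟨n, hn⟩ := (hz.eventually_mem (E0_mem_nhds ha)).exists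
    exact mem_of_iterate_mem ha h _ z (Or.inl hn)
  rintro z (hz | hz)
  · exact h0 z hz
  · -- the even iterates of `G_a z` tend to `G_a ∞ = 0`
    refine mem_of_iterate_mem ha h 1 z (h0 (Ga a z) ?_)
    have := ((continuous_Ga ha).tendsto _).comp hz
    rw [Ga_infty] at this
    refine this.congr fun n => ?_
    rw [Function.comp_apply, ← Function.iterate_succ_apply, Function.iterate_succ_apply']
end

section
/- Let K₁, K₂ ⊆ S² be compact, connected, locally connected sets, and let H : S² → S² be a bijection such that the restriction of H to K₁ is a homeomorphism onto K₂ and such that, for every connected component U of S² ∖ K₁, there is a connected component U′ of S² ∖ K₂ for which the restriction of H to the closure of U is a homeomorphism onto the closure of U′. Then H is a homeomorphism of S². -/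
/-!
`H` is continuous on `K₁` and on the closure of each component of `K₁ᶜ`, but there may be infinitely
many components, so the point is to rule out a jump along a sequence of pairwise different ones.
This follows from a classical fact about a compact locally connected `K ⊆ S²`: for `p ≠ q`, only
finitely many components of `Kᶜ` come close to both `p` and `q` (`finite_complComponents`). Applied
to `K₂`, it works as follows. If `H` jumps from `H x` to near `z ≠ H x` at points `y` tending to
`x ∈ K₁`, the component `U` of `y` has frontier points near `x`, which lie in `K₁` and so are sent
near `H x`. Hence the component of `K₂ᶜ` corresponding to `U` comes close to both `H x` and `z`.
There are finitely many such `U`, and on finitely many closed pieces `H` cannot jump.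

The finiteness fact is moved to the plane by stereographic projection from a point of `Kᶜ`, and
there it is a Mayer-Vietoris argument in the style of Eilenberg, with `H¹` replaced by the existence
of continuous logarithms. By compactness and local connectedness, the part of `K` on a circle
around `p` separating `p` from `q` is covered by `m` connected closed subsets of `K` inside a thin
annulus; let `L` be their union. Then `K = P ∪ Q` with `P ∩ Q = L`, where `P` is `L` together with
the part of `K` inside the circle and `Q` is `L` together with the part outside. Suppose that
`m + 2` bounded components `U₀, …, U_{m+1}` of `Kᶜ` contain points `a_k` near `p` and `b_k` near
`q`. The functions `(z - a_k) / (z - a₀)` have continuous logarithms on `P` (move `a_k` to `b_k`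
inside `U_k`) and on `Q`. For each `k` the two logarithms differ by an integer multiple of `2πi` on
each of the `m` pieces of `L`. A nontrivial integer relation among these `m + 1` vectors in `ℤ^m`
gives a product of powers `((z - a_k) / (z - a₀)) ^ n_k`, not all `n_k` zero, with a continuous
logarithm on all of `K` (`exists_hasLogOn_prod`). If `n_k ≠ 0`, Tietze extension across `U_k` then
produces a nonvanishing continuous function on `ℂ` equal to `(z - a_k) ^ n_k` far away
(`eq_zero_of_hasLogOn`), which is impossible since a nonvanishing continuous function on `ℂ` has a
continuous logarithm and thus no winding.
-/

/-- The 2-sphere, realized as the unit sphere in `ℝ³`. -/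
abbrev S2 : Set (EuclideanSpace ℝ (Fin 3)) := Metric.sphere 0 1

open Set Filter Topology

/-! ### Continuous logarithms in the plane -/

/-- `f` has a continuous logarithm on `S`; in particular `f` does not vanish on `S`. -/
def HasLogOn (f : ℂ → ℂ) (S : Set ℂ) : Prop :=
  ∃ g : ℂ → ℂ, ContinuousOn g S ∧ ∀ z ∈ S, f z = Complex.exp (g z)

namespace HasLogOn
variable {f g : ℂ → ℂ} {S T : Set ℂ}

theorem mono (h : HasLogOn f S) (hT : T ⊆ S) : HasLogOn f T := by
  obtain ⟨u, hu, e⟩ := h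
  exact ⟨u, hu.mono hT, fun z hz => e z (hT hz)⟩

theorem congr (h : HasLogOn f S) (e : ∀ z ∈ S, g z = f z) : HasLogOn g S := by
  obtain ⟨u, hu, e'⟩ := h
  exact ⟨u, hu, fun z hz => (e z hz).trans (e' z hz)⟩

theorem mul (hf : HasLogOn f S) (hg : HasLogOn g S) : HasLogOn (fun z => f z * g z) S := by
  obtain ⟨u, hu, e⟩ := hf
  obtain ⟨v, hv, e'⟩ := hg
  exact ⟨fun z => u z + v z, hu.add hv, fun z hz => by
    simp only [Complex.exp_add, e z hz, e' z hz]⟩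

theorem inv (hf : HasLogOn f S) : HasLogOn (fun z => (f z)⁻¹) S := by
  obtain ⟨u, hu, e⟩ := hf
  exact ⟨fun z => -u z, hu.neg, fun z hz => by simp only [Complex.exp_neg, e z hz]⟩

theorem div (hf : HasLogOn f S) (hg : HasLogOn g S) : HasLogOn (fun z => f z / g z) S := by
  simpa only [div_eq_mul_inv] using hf.mul hg.inv

theorem of_slitPlane (hf : ContinuousOn f S) (h : ∀ z ∈ S, f z ∈ Complex.slitPlane) :
    HasLogOn f S :=
  ⟨fun z => Complex.log (f z), hf.clog h,
    fun z hz => (Complex.exp_log (Complex.slitPlane_ne_zero (h z hz))).symm⟩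

theorem const {c : ℂ} (hc : c ≠ 0) : HasLogOn (fun _ => c) S :=
  ⟨fun _ => Complex.log c, continuousOn_const, fun _ _ => (Complex.exp_log hc).symm⟩

end HasLogOn

/-- The fibres of `exp` are discrete, so a continuous function into one of them is constant on
preconnected sets. -/
theorem eq_of_exp_eq_const {X : Type*} [TopologicalSpace X] {S : Set X} (hS : IsPreconnected S)
    {φ : X → ℂ} (hφ : ContinuousOn φ S) {c : ℂ} (hc : ∀ x ∈ S, Complex.exp (φ x) = c)
    {x y : X} (hx : x ∈ S) (hy : y ∈ S) : φ x = φ y := by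
  have hc0 : c ≠ 0 := hc x hx ▸ Complex.exp_ne_zero _
  have : DiscreteTopology (Complex.exp ⁻¹' {c}) := (Complex.isCoveringMapOn_exp c hc0).1
  exact hS.constant_of_mapsTo ⟨this⟩ hφ (T := Complex.exp ⁻¹' {c}) (fun z hz => hc z hz) hx hy

/-- A nonvanishing continuous function on `ℂ` has winding number zero along every circle. -/
theorem zpow_eq_zero_of_extends {G : ℂ → ℂ} (hG : Continuous G) (h0 : ∀ z, G z ≠ 0)
    {n : ℤ} {a : ℂ} {R : ℝ} (hR : 0 < R) (h : ∀ z, ‖z - a‖ = R → G z = (z - a) ^ n) : n = 0 := by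
  have hsc : IsSimplyConnected (univ : Set ℂ) :=
    (Homeomorph.Set.univ ℂ).toHomotopyEquiv.simplyConnectedSpace_iff.2 inferInstance
  obtain ⟨l, hl, e⟩ := Complex.exists_continuousOn_eqOn_exp_comp hsc isOpen_univ
    hG.continuousOn (by rintro ⟨z, -, hz⟩; exact h0 z hz)
  rw [continuousOn_univ] at hl
  -- a logarithm along the circle minus the logarithm `n * (t * I)` of `exp (t * I) ^ n`
  let φ : ℝ → ℂ := fun t => l (a + R * Complex.exp (t * Complex.I)) - n * (t * Complex.I)
  have hφ : Continuous φ := by fun_prop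
  have hexp : ∀ t ∈ (univ : Set ℝ), Complex.exp (φ t) = (R : ℂ) ^ n := by
    intro t _
    have h1 : Complex.exp (l (a + R * Complex.exp (t * Complex.I)))
        = (R * Complex.exp (t * Complex.I)) ^ n := by
      have := e (mem_univ (a + R * Complex.exp (t * Complex.I)))
      simp only [Function.comp] at this
      rw [this, h _ (by simp [Complex.norm_exp_ofReal_mul_I, abs_of_pos hR]), add_sub_cancel_left]
    simp only [φ]
    rw [Complex.exp_sub, h1, Complex.exp_int_mul, mul_zpow, mul_div_assoc, div_self, mul_one]
    exact zpow_ne_zero _ (Complex.exp_ne_zero _)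
  have key := eq_of_exp_eq_const isPreconnected_univ hφ.continuousOn hexp (mem_univ 0)
    (mem_univ (2 * Real.pi))
  simp only [φ, Complex.ofReal_mul, Complex.ofReal_ofNat, Complex.exp_two_pi_mul_I,
    Complex.ofReal_zero, zero_mul, Complex.exp_zero, mul_zero, sub_zero] at key
  have : (n : ℂ) * (2 * Real.pi * Complex.I) = 0 := by linear_combination key
  simpa [Real.pi_ne_zero] using this

/-- Moving `a` to `b` without meeting `K` does not change the class of `z - a` on `K` modulo
functions with a continuous logarithm. -/
theorem hasLogOn_sub_div_sub {K U : Set ℂ} (hK : IsClosed K) (hU : IsPreconnected U)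
    (hd : Disjoint U K) {a b : ℂ} (ha : a ∈ U) (hb : b ∈ U) :
    HasLogOn (fun z => (z - a) / (z - b)) K := by
  have hne : ∀ x ∈ U, ∀ z ∈ K, z - x ≠ 0 := fun x hx z hz h =>
    hd.notMem_of_mem_left hx (sub_eq_zero.1 h ▸ hz)
  refine hU.induction₂ (fun a b => HasLogOn (fun z => (z - a) / (z - b)) K) ?_ ?_ ?_ ha hb
  · intro x hx
    have hxK : Kᶜ ∈ 𝓝 x := hK.isOpen_compl.mem_nhds (hd.notMem_of_mem_left hx)
    obtain ⟨ε, hε, hball⟩ := Metric.mem_nhds_iff.1 hxK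
    refine mem_nhdsWithin_of_mem_nhds (mem_of_superset (Metric.ball_mem_nhds x hε) ?_)
    intro y hy
    have hy' : ∀ z ∈ K, ε ≤ ‖z - x‖ := fun z hz => by
      by_contra! hlt
      exact hball (by simpa [dist_eq_norm] using hlt) hz
    have h1 : HasLogOn (fun z => (z - y) / (z - x)) K := by
      refine HasLogOn.of_slitPlane
        (ContinuousOn.div (by fun_prop) (by fun_prop) (hne x hx)) fun z hz => ?_
      have : (z - y) / (z - x) = 1 + (x - y) / (z - x) := by
        field_simp [hne x hx z hz]; ring
      rw [this]
      refine Complex.mem_slitPlane_of_norm_lt_one ?_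
      rw [norm_div, div_lt_one (hε.trans_le (hy' z hz)), norm_sub_rev]
      exact (by simpa [dist_eq_norm] using hy : ‖y - x‖ < ε).trans_le (hy' z hz)
    exact h1.inv.congr fun z hz => by simp
  · intro x y z _ hy _ h1 h2
    exact (h1.mul h2).congr fun w hw => by field_simp [hne y hy w hw]
  · intro x y _ _ h
    exact h.inv.congr fun z hz => by simp

/-- A bounded open set `U ∋ a` is detected on its frontier: even after multiplication by a
function `R` that is continuous and nonvanishing on `closure U`, no nontrivial power of `z - a` has
a continuous logarithm on `frontier U`. -/
theorem eq_zero_of_hasLogOn {U : Set ℂ} (hU : IsOpen U) (hb : Bornology.IsBounded U)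
    {a : ℂ} (ha : a ∈ U) {R : ℂ → ℂ} (hR : ContinuousOn R (closure U))
    (hR0 : ∀ z ∈ closure U, R z ≠ 0) {n : ℤ}
    (h : HasLogOn (fun z => (z - a) ^ n * R z) (frontier U)) : n = 0 := by
  classical
  obtain ⟨g, hg, e⟩ := h
  obtain ⟨g', hg'⟩ := ContinuousMap.exists_restrict_eq (Y := ℂ) (isClosed_frontier (s := U))
    ⟨(frontier U).domRestrict g, continuousOn_iff_continuous_domRestrict.1 hg⟩
  have hgg : ∀ z ∈ frontier U, g' z = g z := fun z hz => DFunLike.congr_fun hg' ⟨z, hz⟩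
  have hne : ∀ z ∉ U, z - a ≠ 0 := fun z hz h => hz (sub_eq_zero.1 h ▸ ha)
  -- the logarithm on the frontier, extended by Tietze, replaces `(z - a) ^ n` in `U`
  let G : ℂ → ℂ := U.piecewise (fun z => Complex.exp (g' z) / R z) (fun z => (z - a) ^ n)
  have hG : Continuous G := by
    refine continuous_piecewise ?_ ?_ ?_
    · intro z hz
      rw [hgg z hz, ← e z hz, mul_div_assoc, div_self (hR0 z (frontier_subset_closure hz)), mul_one]
    · exact ContinuousOn.div (by fun_prop) hR hR0
    · rw [hU.isClosed_compl.closure_eq]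
      exact ContinuousOn.zpow₀ (by fun_prop) n fun z hz => Or.inl (hne z hz)
  have hG0 : ∀ z, G z ≠ 0 := by
    intro z
    by_cases hz : z ∈ U
    · simp only [G, piecewise_eq_of_mem _ _ _ hz]
      exact div_ne_zero (Complex.exp_ne_zero _) (hR0 z (subset_closure hz))
    · simp only [G, piecewise_eq_of_notMem _ _ _ hz]
      exact zpow_ne_zero _ (hne z hz)
  obtain ⟨r, hr, hUr⟩ := hb.subset_ball_lt 0 a
  refine zpow_eq_zero_of_extends hG hG0 hr (a := a) fun z hz => ?_
  have : z ∉ U := fun hzU => by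
    have := hUr hzU
    rw [Metric.mem_ball, dist_eq_norm] at this
    exact this.ne hz
  simp only [G, piecewise_eq_of_notMem _ _ _ this]

/-- Mayer-Vietoris: if `P ∩ Q` is a union of `m` preconnected sets, then among more than `m`
functions with continuous logarithms on both `P` and `Q` some nontrivial product of integer powers
has a continuous logarithm on `P ∪ Q`. -/
theorem exists_hasLogOn_prod {ι κ : Type*} [Fintype ι] [Fintype κ]
    (hcard : Fintype.card ι < Fintype.card κ) {P Q : Set ℂ} (hP : IsClosed P) (hQ : IsClosed Q)
    {C : ι → Set ℂ} (hC : ∀ i, IsPreconnected (C i)) (hPQ : P ∩ Q = ⋃ i, C i)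
    {f : κ → ℂ → ℂ} (hfP : ∀ k, HasLogOn (f k) P) (hfQ : ∀ k, HasLogOn (f k) Q) :
    ∃ n : κ → ℤ, (∃ k, n k ≠ 0) ∧ HasLogOn (fun z => ∏ k, f k z ^ n k) (P ∪ Q) := by
  classical
  choose u hu eu using hfP
  choose v hv ev using hfQ
  have hsub : ∀ i, C i ⊆ P ∩ Q := fun i => hPQ ▸ subset_iUnion C i
  have hd : ∀ k i, ∃ d : ℤ, ∀ z ∈ C i, u k z - v k z = d * (2 * Real.pi * Complex.I) := by
    intro k i
    rcases (C i).eq_empty_or_nonempty with h | ⟨z₀, hz₀⟩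
    · exact ⟨0, by simp [h]⟩
    have hone : ∀ z ∈ C i, Complex.exp (u k z - v k z) = 1 := fun z hz => by
      rw [Complex.exp_sub, ← eu k z (hsub i hz).1, ← ev k z (hsub i hz).2, div_self]
      rw [eu k z (hsub i hz).1]
      exact Complex.exp_ne_zero _
    obtain ⟨d, hd⟩ := Complex.exp_eq_one_iff.1 (hone z₀ hz₀)
    refine ⟨d, fun z hz => ?_⟩
    rw [← hd]
    exact eq_of_exp_eq_const (hC i) (φ := fun z => u k z - v k z)
      (((hu k).mono fun z hz => (hsub i hz).1).sub ((hv k).mono fun z hz => (hsub i hz).2))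
      hone hz hz₀
  choose d hd using hd
  -- more vectors than the rank of `ι → ℤ`
  have hdep : ¬ LinearIndependent ℤ d := fun hli => by
    have := hli.fintype_card_le_finrank
    rw [Module.finrank_fintype_fun_eq_card] at this
    omega
  obtain ⟨n, hn, hn0⟩ := Fintype.not_linearIndependent_iff.1 hdep
  refine ⟨n, hn0, P.piecewise (fun z => ∑ k, n k * u k z) (fun z => ∑ k, n k * v k z), ?_, ?_⟩
  · have hQeq : ∀ z ∈ Q, P.piecewise (fun z => ∑ k, n k * u k z) (fun z => ∑ k, n k * v k z) z
        = ∑ k, n k * v k z := by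
      intro z hzQ
      by_cases hzP : z ∈ P
      · rw [piecewise_eq_of_mem _ _ _ hzP, ← sub_eq_zero, ← Finset.sum_sub_distrib]
        obtain ⟨i, hi⟩ := mem_iUnion.1 (hPQ.subset ⟨hzP, hzQ⟩)
        have h1 : ∑ k, n k * d k i = 0 := by simpa using congr_fun hn i
        have h2 : ∑ k, (n k : ℂ) * d k i = 0 := by exact_mod_cast h1
        calc ∑ k, ((n k : ℂ) * u k z - n k * v k z)
            = ∑ k, ((n k : ℂ) * d k i) * (2 * Real.pi * Complex.I) :=
              Finset.sum_congr rfl fun k _ => by rw [← mul_sub, hd k i z hi]; ring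
          _ = 0 := by rw [← Finset.sum_mul, h2, zero_mul]
      · rw [piecewise_eq_of_notMem _ _ _ hzP]
    refine ContinuousOn.union_of_isClosed ?_ ?_ hP hQ
    · refine ContinuousOn.congr ?_ fun z hz => piecewise_eq_of_mem _ _ _ hz
      exact continuousOn_finsetSum _ fun k _ => continuousOn_const.mul (hu k)
    · refine ContinuousOn.congr ?_ hQeq
      exact continuousOn_finsetSum _ fun k _ => continuousOn_const.mul (hv k)
  · intro z hz
    by_cases hzP : z ∈ P
    · rw [piecewise_eq_of_mem _ _ _ hzP, Complex.exp_sum]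
      exact Finset.prod_congr rfl fun k _ => by rw [Complex.exp_int_mul, eu k z hzP]
    · have hzQ : z ∈ Q := hz.resolve_left hzP
      rw [piecewise_eq_of_notMem _ _ _ hzP, Complex.exp_sum]
      exact Finset.prod_congr rfl fun k _ => by rw [Complex.exp_int_mul, ev k z hzQ]

/-! ### Complementary components of a locally connected compactum -/

/-- In a compact locally connected set `K`, the part of `K` on a closed set `S` is covered by
finitely many connected closed subsets of `K` of small diameter near `S`. -/
theorem exists_finset_cover {X : Type*} [MetricSpace X] {K S : Set X} (hK : IsCompact K)
    (hlc : LocallyConnectedSpace K) (hS : IsClosed S) {δ : ℝ} (hδ : 0 < δ) :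
    ∃ t : Finset (Set X), (∀ C ∈ t, IsPreconnected C ∧ IsClosed C ∧ C ⊆ K ∧
      ∃ x ∈ S, C ⊆ Metric.closedBall x δ) ∧ K ∩ S ⊆ ⋃ C ∈ t, C := by
  classical
  have hloc : ∀ x ∈ K ∩ S, ∃ N ∈ 𝓝[K] x, IsPreconnected N ∧ N ⊆ K ∧ N ⊆ Metric.closedBall x δ := by
    rintro x ⟨hx, -⟩
    obtain ⟨V, hV, hVc, hVs⟩ := (locallyConnectedSpace_iff_connected_subsets (α := K)).1 hlc ⟨x, hx⟩
      (Subtype.val ⁻¹' Metric.closedBall x δ)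
      (continuous_subtype_val.continuousAt.preimage_mem_nhds (Metric.closedBall_mem_nhds x hδ))
    refine ⟨Subtype.val '' V, ?_, hVc.image _ continuous_subtype_val.continuousOn,
      Subtype.coe_image_subset _ _, image_subset_iff.2 hVs⟩
    rw [nhdsWithin_eq_map_subtype_coe hx]
    exact image_mem_map hV
  choose! N hN hNc hNK hNb using hloc
  obtain ⟨t, ht, hcov⟩ := (hK.inter_right hS).elim_nhdsWithin_subcover N
    fun x hx => nhdsWithin_mono x inter_subset_left (hN x hx)
  refine ⟨t.image fun x => closure (N x), ?_, ?_⟩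
  · simp only [Finset.mem_image, forall_exists_index, and_imp, forall_apply_eq_imp_iff₂]
    intro x hx
    exact ⟨(hNc x (ht x hx)).closure, isClosed_closure,
      closure_minimal (hNK x (ht x hx)) hK.isClosed, x, (ht x hx).2,
      closure_minimal (hNb x (ht x hx)) Metric.isClosed_closedBall⟩
  · intro z hz
    obtain ⟨x, hx, hzx⟩ := mem_iUnion₂.1 (hcov hz)
    exact mem_iUnion₂.2 ⟨_, Finset.mem_image_of_mem _ hx, subset_closure hzx⟩

/-- Only finitely many bounded complementary domains of a compact locally connected plane set
come close to two given distinct points. The hypotheses on `𝒰` say that its members are such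
domains; they are stated without reference to connected components so that they pull back easily
along stereographic projection. -/
theorem finite_planar {K : Set ℂ} (hK : IsCompact K) (hlc : LocallyConnectedSpace K)
    {p q : ℂ} (hpq : p ≠ q) : ∃ r > 0, ∀ 𝒰 : Set (Set ℂ), 𝒰.PairwiseDisjoint id →
      (∀ U ∈ 𝒰, IsOpen U ∧ IsPreconnected U ∧ Bornology.IsBounded U ∧ frontier U ⊆ K ∧
        Disjoint U K ∧ (U ∩ Metric.ball p r).Nonempty ∧ (U ∩ Metric.ball q r).Nonempty) →
      𝒰.Finite := by
  classical
  set D := dist p q with hD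
  have hD0 : 0 < D := dist_pos.2 hpq
  obtain ⟨t, ht, hcov⟩ := exists_finset_cover hK hlc (Metric.isClosed_sphere (x := p) (ε := D / 2))
    (δ := D / 8) (by positivity)
  set L : Set ℂ := ⋃ C : t, (C : Set ℂ) with hL
  have hLcl : IsClosed L := isClosed_iUnion_of_finite fun C => (ht C C.2).2.1
  have hLK : L ⊆ K := iUnion_subset fun C => (ht C C.2).2.2.1
  have hLann : ∀ z ∈ L, 3 * D / 8 ≤ dist z p ∧ dist z p ≤ 5 * D / 8 := by
    intro z hz
    obtain ⟨C, hC⟩ := mem_iUnion.1 hz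
    obtain ⟨x, hx, hCx⟩ := (ht C C.2).2.2.2
    have h1 : dist z x ≤ D / 8 := hCx hC
    have h2 : dist x p = D / 2 := hx
    have h3 := dist_triangle z x p
    have h4 := dist_triangle x z p
    rw [dist_comm x z] at h4
    constructor <;> linarith
  set P : Set ℂ := (K ∩ Metric.closedBall p (D / 2)) ∪ L with hP
  set Q : Set ℂ := (K ∩ {z | D / 2 ≤ dist z p}) ∪ L with hQ
  have hPcl : IsClosed P := (hK.isClosed.inter Metric.isClosed_closedBall).union hLcl
  have hQcl : IsClosed Q :=
    (hK.isClosed.inter (isClosed_le continuous_const (by fun_prop))).union hLcl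
  have hPK : P ⊆ K := union_subset inter_subset_left hLK
  have hQK : Q ⊆ K := union_subset inter_subset_left hLK
  have hPQ : P ∩ Q = L := by
    refine Subset.antisymm ?_ (subset_inter subset_union_right subset_union_right)
    rintro z ⟨⟨hzK, hz1⟩ | h, ⟨-, hz2⟩ | h'⟩
    · have := hcov ⟨hzK, le_antisymm hz1 hz2⟩
      simpa [hL] using this
    all_goals assumption
  have hPuQ : P ∪ Q = K := by
    refine Subset.antisymm (union_subset hPK hQK) fun z hz => ?_
    rcases le_total (dist z p) (D / 2) with h | h
    · exact Or.inl (Or.inl ⟨hz, h⟩)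
    · exact Or.inr (Or.inl ⟨hz, h⟩)
  have hPd : ∀ z ∈ P, dist z p ≤ 5 * D / 8 := by
    rintro z (⟨-, h⟩ | h)
    · have : dist z p ≤ D / 2 := h
      linarith
    · exact (hLann z h).2
  have hQd : ∀ z ∈ Q, 3 * D / 8 ≤ dist z p := by
    rintro z (⟨-, h⟩ | h)
    · have : D / 2 ≤ dist z p := h
      linarith
    · exact (hLann z h).1
  refine ⟨D / 4, by positivity, fun 𝒰 hdisj h𝒰 => ?_⟩
  by_contra hinf
  have hinf : 𝒰.Infinite := hinf
  let φ := hinf.natEmbedding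
  let U : ℕ → Set ℂ := fun n => φ n
  have hU : ∀ n, _ := fun n => h𝒰 (U n) (φ n).2
  choose hUo hUc hUb hUf hUK hUp hUq using hU
  have hUd : ∀ m n, m ≠ n → Disjoint (U m) (U n) := fun m n hmn =>
    hdisj (φ m).2 (φ n).2 fun h => hmn (φ.injective (Subtype.ext h))
  choose a ha using hUp
  choose b hb using hUq
  have haK : ∀ n, ∀ z ∈ K, z - a n ≠ 0 := fun n z hz h =>
    (hUK n).notMem_of_mem_left (ha n).1 (sub_eq_zero.1 h ▸ hz)
  have hbK : ∀ n, ∀ z ∈ K, z - b n ≠ 0 := fun n z hz h =>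
    (hUK n).notMem_of_mem_left (hb n).1 (sub_eq_zero.1 h ▸ hz)
  -- on `P`, replace `a n` by `b n`, which lies outside a disc about `p` containing `P`
  have hlogP : ∀ n, HasLogOn (fun z => z - a n) P := by
    intro n
    have hbp : 3 * D / 4 < dist p (b n) := by
      have h1 : dist (b n) q < D / 4 := (hb n).2
      have h2 := dist_triangle p (b n) q
      linarith
    have hbp0 : p - b n ≠ 0 := sub_ne_zero.2 (dist_pos.1 (by linarith))
    have h1 : HasLogOn (fun z => (z - a n) / (z - b n)) P :=
      (hasLogOn_sub_div_sub hK.isClosed (hUc n) (hUK n) (ha n).1 (hb n).1).mono hPK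
    have h2 : HasLogOn (fun z => 1 + (z - p) / (p - b n)) P := by
      refine HasLogOn.of_slitPlane (by fun_prop) fun z hz => ?_
      refine Complex.mem_slitPlane_of_norm_lt_one ?_
      rw [norm_div, ← dist_eq_norm, ← dist_eq_norm, div_lt_one (by linarith)]
      have := hPd z hz
      linarith
    refine ((h1.mul h2).mul (HasLogOn.const hbp0)).congr fun z hz => ?_
    have := hbK n z (hPK hz)
    field_simp
    ring
  -- on `Q`, compare `a n` with `p`: both lie in a disc about `p` that misses `Q`
  have hlogQ : ∀ n, HasLogOn (fun z => (z - a n) / (z - p)) Q := by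
    intro n
    have hzp : ∀ z ∈ Q, z - p ≠ 0 := fun z hz =>
      sub_ne_zero.2 (dist_pos.1 (by have := hQd z hz; linarith))
    have h2 : HasLogOn (fun z => 1 + (p - a n) / (z - p)) Q := by
      refine HasLogOn.of_slitPlane ?_ fun z hz => ?_
      · exact continuousOn_const.add (ContinuousOn.div (by fun_prop) (by fun_prop) hzp)
      · refine Complex.mem_slitPlane_of_norm_lt_one ?_
        have h1 := hQd z hz
        have h2 : dist (a n) p < D / 4 := (ha n).2
        rw [norm_div, ← dist_eq_norm, ← dist_eq_norm, div_lt_one (by linarith), dist_comm p]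
        linarith
    refine h2.congr fun z hz => ?_
    have := hzp z hz
    field_simp
    ring
  obtain ⟨n, ⟨k, hk⟩, hlog⟩ := exists_hasLogOn_prod (ι := t) (κ := Fin (t.card + 1)) (by simp)
    hPcl hQcl (C := fun C => (C : Set ℂ)) (fun C => (ht C C.2).1) hPQ
    (f := fun k z => (z - a (k + 1)) / (z - a 0))
    (fun k => (hlogP _).div (hlogP 0))
    (fun k => ((hlogQ (k + 1)).div (hlogQ 0)).congr fun z hz => by
      have h1 : z - p ≠ 0 := sub_ne_zero.2 (dist_pos.1 (by have := hQd z hz; linarith))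
      have := haK 0 z (hQK hz)
      field_simp)
  rw [hPuQ] at hlog
  have hout : ∀ m : ℕ, m ≠ (k : ℕ) + 1 → ∀ z ∈ closure (U (k + 1)), z - a m ≠ 0 :=
    fun m hm z hz h =>
    ((hUd m (k + 1) hm).closure_right (hUo m)).notMem_of_mem_left (ha m).1 (sub_eq_zero.1 h ▸ hz)
  have hj' : ∀ j ∈ Finset.univ.erase k, (j : ℕ) + 1 ≠ (k : ℕ) + 1 := fun j hj h =>
    Finset.ne_of_mem_erase hj (Fin.ext (by omega))
  refine hk (eq_zero_of_hasLogOn (hUo (k + 1)) (hUb (k + 1)) (ha (k + 1)).1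
    (R := fun z => (z - a 0) ^ (-n k) *
      ∏ j ∈ Finset.univ.erase k, ((z - a ((j : ℕ) + 1)) / (z - a 0)) ^ n j) ?_ ?_ ?_)
  · refine ContinuousOn.mul ?_ (continuousOn_finsetProd _ fun j hj => ?_)
    · exact ContinuousOn.zpow₀ (by fun_prop) _ fun z hz => Or.inl (hout 0 (by omega) z hz)
    · refine ContinuousOn.zpow₀ (ContinuousOn.div (by fun_prop) (by fun_prop)
        fun z hz => hout 0 (by omega) z hz) _ fun z hz => Or.inl ?_
      exact div_ne_zero (hout _ (hj' j hj) z hz)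
        (hout 0 (by omega) z hz)
  · intro z hz
    refine mul_ne_zero (zpow_ne_zero _ (hout 0 (by omega) z hz)) (Finset.prod_ne_zero_iff.2 ?_)
    intro j hj
    exact zpow_ne_zero _ (div_ne_zero
      (hout _ (hj' j hj) z hz)
      (hout 0 (by omega) z hz))
  · refine (hlog.mono (hUf _)).congr fun z hz => ?_
    rw [← Finset.mul_prod_erase _ _ (Finset.mem_univ k), div_zpow, zpow_neg, ← mul_assoc,
      div_eq_mul_inv]

section Components
variable {X : Type*} [TopologicalSpace X]

/-- The connected components of the complement of `K`. -/
def complComponents (K : Set X) : Set (Set X) := {U | ∃ w ∈ Kᶜ, U = connectedComponentIn Kᶜ w}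

variable {K U V : Set X}

theorem complComponents_disjoint (hU : U ∈ complComponents K) : Disjoint U K := by
  obtain ⟨w, -, rfl⟩ := hU
  exact disjoint_left.2 fun z hz => connectedComponentIn_subset _ _ hz

theorem complComponents_isPreconnected (hU : U ∈ complComponents K) : IsPreconnected U := by
  obtain ⟨w, -, rfl⟩ := hU
  exact isPreconnected_connectedComponentIn

theorem complComponents_nonempty (hU : U ∈ complComponents K) : U.Nonempty := by
  obtain ⟨w, hw, rfl⟩ := hU
  exact ⟨w, mem_connectedComponentIn hw⟩

theorem complComponents_eq {z : X} (hU : U ∈ complComponents K) (hz : z ∈ U) :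
    U = connectedComponentIn Kᶜ z := by
  obtain ⟨w, hw, rfl⟩ := hU
  exact connectedComponentIn_eq hz

theorem complComponents_eq_of_inter (hU : U ∈ complComponents K) (hV : V ∈ complComponents K)
    (h : (U ∩ V).Nonempty) : U = V := by
  obtain ⟨z, hzU, hzV⟩ := h
  rw [complComponents_eq hU hzU, complComponents_eq hV hzV]

theorem complComponents_pairwiseDisjoint : (complComponents K).PairwiseDisjoint id :=
  fun _ hU _ hV hne => disjoint_iff_inter_eq_empty.2
    (not_nonempty_iff_eq_empty.1 fun h => hne (complComponents_eq_of_inter hU hV h))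

variable [LocallyConnectedSpace X]

theorem complComponents_isOpen (hK : IsClosed K) (hU : U ∈ complComponents K) : IsOpen U := by
  obtain ⟨w, -, rfl⟩ := hU
  exact hK.isOpen_compl.connectedComponentIn

theorem complComponents_frontier (hK : IsClosed K) (hU : U ∈ complComponents K) :
    frontier U ⊆ K := by
  intro z hz
  by_contra hzK
  have hV : connectedComponentIn Kᶜ z ∈ complComponents K := ⟨z, hzK, rfl⟩
  have hzV : z ∈ connectedComponentIn Kᶜ z := mem_connectedComponentIn hzK
  have hne : (connectedComponentIn Kᶜ z ∩ U).Nonempty :=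
    mem_closure_iff.1 (frontier_subset_closure hz) _ (complComponents_isOpen hK hV) hzV
  have heq := complComponents_eq_of_inter hV hU hne
  rw [(complComponents_isOpen hK hU).frontier_eq] at hz
  exact hz.2 (heq ▸ hzV)

/-- A component of the complement is determined by its closure. -/
theorem complComponents_closure_inj (hK : IsClosed K) (hU : U ∈ complComponents K)
    (hV : V ∈ complComponents K) (h : closure U = closure V) : U = V := by
  obtain ⟨z, hz⟩ := complComponents_nonempty hU
  refine complComponents_eq_of_inter hU hV ?_
  exact mem_closure_iff.1 (h ▸ subset_closure hz) U (complComponents_isOpen hK hU) hz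

end Components

theorem locallyConnectedSpace_S2 : LocallyConnectedSpace S2 := by
  have : Fact (Module.finrank ℝ (EuclideanSpace ℝ (Fin 3)) = 2 + 1) := ⟨by simp⟩
  exact ChartedSpace.locallyConnectedSpace (EuclideanSpace ℝ (Fin 2)) S2

/-- Inverse stereographic projection from `w`, with the plane identified with `ℂ`. -/
theorem exists_chart (w : S2) : ∃ ψ : ℂ → S2, IsOpenEmbedding ψ ∧ range ψ = {w}ᶜ := by
  have : Fact (Module.finrank ℝ (EuclideanSpace ℝ (Fin 3)) = 2 + 1) := ⟨by simp⟩
  let e := stereographic' 2 w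
  have h : IsOpenEmbedding e.symm :=
    e.symm.isOpenEmbedding (by simp [e])
  refine ⟨e.symm ∘ Complex.orthonormalBasisOneI.repr,
    h.comp Complex.orthonormalBasisOneI.repr.toHomeomorph.isOpenEmbedding, ?_⟩
  rw [Complex.orthonormalBasisOneI.repr.surjective.range_comp, ← image_univ,
    ← stereographic'_target w, e.symm_image_target_eq_source, stereographic'_source]

/-- Only finitely many components of the complement of a compact locally connected subset of the
sphere come close to two given distinct points. -/
theorem finite_complComponents {K : Set S2} (hK : IsCompact K) (hlc : LocallyConnectedSpace K)
    {p q : S2} (hpq : p ≠ q) : ∃ V ∈ 𝓝 p, ∃ W ∈ 𝓝 q,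
      {U ∈ complComponents K | (U ∩ V).Nonempty ∧ (U ∩ W).Nonempty}.Finite := by
  have := locallyConnectedSpace_S2
  -- a component containing `p` or `q` is the only one near that point
  have hsing : ∀ x, ∀ U₀ ∈ complComponents K, x ∈ U₀ → ∀ 𝒰 : Set (Set S2),
      (∀ U ∈ 𝒰, U ∈ complComponents K ∧ (U ∩ U₀).Nonempty) → 𝒰.Finite := by
    intro x U₀ hU₀ hx 𝒰 h𝒰
    exact (finite_singleton U₀).subset fun U hU =>
      complComponents_eq_of_inter (h𝒰 U hU).1 hU₀ (h𝒰 U hU).2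
  rcases (complComponents K).eq_empty_or_nonempty with h | ⟨U₀, hU₀⟩
  · exact ⟨univ, univ_mem, univ, univ_mem, by simp [h]⟩
  have hU₀o := complComponents_isOpen hK.isClosed hU₀
  by_cases hp : p ∈ U₀
  · exact ⟨U₀, hU₀o.mem_nhds hp, univ, univ_mem, hsing p U₀ hU₀ hp _ fun U hU => ⟨hU.1, hU.2.1⟩⟩
  by_cases hq : q ∈ U₀
  · exact ⟨univ, univ_mem, U₀, hU₀o.mem_nhds hq, hsing q U₀ hU₀ hq _ fun U hU => ⟨hU.1, hU.2.2⟩⟩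
  -- projecting from a point of `U₀` makes all other components bounded
  obtain ⟨w, hw⟩ := complComponents_nonempty hU₀
  obtain ⟨ψ, hψ, hrange⟩ := exists_chart w
  have hsub : ∀ s : Set S2, w ∉ s → s ⊆ range ψ := fun s hs => by
    rw [hrange, subset_compl_singleton_iff]; exact hs
  have hcpt : ∀ s : Set S2, IsClosed s → w ∉ s → IsCompact (ψ ⁻¹' s) := fun s hs hws =>
    hψ.isInducing.isCompact_preimage' hs.isCompact (hsub s hws)
  have hwK : w ∉ K := (complComponents_disjoint hU₀).notMem_of_mem_left hw
  have hK' : IsCompact (ψ ⁻¹' K) := hcpt K hK.isClosed hwK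
  have hlc' : LocallyConnectedSpace ↥(ψ ⁻¹' K) := by
    let e : ↥(ψ ⁻¹' K) → K := K.restrictPreimage ψ
    have he : IsOpenEmbedding e := hψ.restrictPreimage K
    exact he.locallyConnectedSpace
  obtain ⟨p', rfl⟩ : p ∈ range ψ := by rw [hrange]; rintro rfl; exact hp hw
  obtain ⟨q', rfl⟩ : q ∈ range ψ := by rw [hrange]; rintro rfl; exact hq hw
  obtain ⟨r, hr, hfin⟩ := finite_planar hK' hlc' (fun h => hpq (congrArg ψ h) : p' ≠ q')
  refine ⟨ψ '' Metric.ball p' r, hψ.image_mem_nhds.2 (Metric.ball_mem_nhds _ hr),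
    ψ '' Metric.ball q' r, hψ.image_mem_nhds.2 (Metric.ball_mem_nhds _ hr), ?_⟩
  set 𝒰 := {U ∈ complComponents K | (U ∩ ψ '' Metric.ball p' r).Nonempty ∧
    (U ∩ ψ '' Metric.ball q' r).Nonempty} with h𝒰
  have hwU : ∀ U ∈ 𝒰 \ {U₀}, w ∉ U := fun U hU hwU =>
    hU.2 (complComponents_eq_of_inter hU.1.1 hU₀ ⟨w, hwU, hw⟩)
  have hinj : InjOn (fun U => ψ ⁻¹' U) (𝒰 \ {U₀}) := by
    intro U hU V hV h
    rw [← image_preimage_eq_of_subset (hsub U (hwU U hU)),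
      ← image_preimage_eq_of_subset (hsub V (hwU V hV))]
    exact congrArg (ψ '' ·) h
  have hfin' : (𝒰 \ {U₀}).Finite := by
    refine Finite.of_finite_image (hfin _ ?_ ?_) hinj
    · rintro _ ⟨U, hU, rfl⟩ _ ⟨V, hV, rfl⟩ hne
      exact (complComponents_pairwiseDisjoint hU.1.1 hV.1.1 fun h => hne (h ▸ rfl)).preimage ψ
    · rintro _ ⟨U, hU, rfl⟩
      have hUc := hU.1.1
      refine ⟨(complComponents_isOpen hK.isClosed hUc).preimage hψ.continuous,
        (complComponents_isPreconnected hUc).preimage_of_isOpenMap hψ.injective hψ.isOpenMap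
          (hsub U (hwU U hU)), ?_, ?_, (complComponents_disjoint hUc).preimage ψ, ?_, ?_⟩
      · refine (hcpt U₀ᶜ hU₀o.isClosed_compl fun h => h hw).isBounded.subset (preimage_mono ?_)
        exact (complComponents_pairwiseDisjoint hUc hU₀ hU.2).subset_compl_right
      · rw [← hψ.isOpenMap.preimage_frontier_eq_frontier_preimage hψ.continuous]
        exact preimage_mono (complComponents_frontier hK.isClosed hUc)
      · obtain ⟨_, hz, z, hzb, rfl⟩ := hU.1.2.1
        exact ⟨z, hz, hzb⟩
      · obtain ⟨_, hz, z, hzb, rfl⟩ := hU.1.2.2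
        exact ⟨z, hz, hzb⟩
  exact (hfin'.union (finite_singleton U₀)).subset fun U hU => by
    by_cases h : U = U₀
    · exact Or.inr h
    · exact Or.inl ⟨hU, h⟩

/-! ### Gluing on the sphere -/

/-- Let `K₁, K₂ ⊆ S²` be compact, connected, locally connected, and let `H : S² → S²` be a
bijection restricting to a homeomorphism `K₁ → K₂` and, on the closure of each connected
component `U` of `S² ∖ K₁`, to a homeomorphism onto the closure of some connected component
of `S² ∖ K₂`.  Then `H` is a homeomorphism of `S²`. -/
theorem isHomeomorph_of_pieces
    (K₁ K₂ : Set S2)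
    (h₁compact : IsCompact K₁) (h₁conn : IsConnected K₁)
    (h₁lc : LocallyConnectedSpace K₁)
    (h₂compact : IsCompact K₂) (h₂conn : IsConnected K₂)
    (h₂lc : LocallyConnectedSpace K₂)
    (H : S2 → S2) (hbij : Function.Bijective H)
    (hK : ∃ e : K₁ ≃ₜ K₂, ∀ p : K₁, (e p : S2) = H p)
    (hcomp : ∀ U : Set S2, (∃ w ∈ K₁ᶜ, U = connectedComponentIn K₁ᶜ w) →
      ∃ U' : Set S2, (∃ w ∈ K₂ᶜ, U' = connectedComponentIn K₂ᶜ w) ∧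
        ∃ e : ↥(closure U) ≃ₜ ↥(closure U'), ∀ p : ↥(closure U), (e p : S2) = H p) :
    IsHomeomorph H := by
  have := locallyConnectedSpace_S2
  have hcont : ∀ {A B : Set S2} (e : A ≃ₜ B), (∀ p : A, (e p : S2) = H p) → ContinuousOn H A := by
    intro A B e he
    rw [continuousOn_iff_continuous_domRestrict]
    exact (continuous_subtype_val.comp e.continuous).congr he
  have himg : ∀ {A B : Set S2} (e : A ≃ₜ B), (∀ p : A, (e p : S2) = H p) → H '' A = B := by
    intro A B e he
    ext y
    constructor
    · rintro ⟨x, hx, rfl⟩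
      exact he ⟨x, hx⟩ ▸ (e ⟨x, hx⟩).2
    · intro hy
      exact ⟨e.symm ⟨y, hy⟩, (e.symm ⟨y, hy⟩).2, by rw [← he]; simp⟩
  have hHK : ContinuousOn H K₁ := by
    obtain ⟨e, he⟩ := hK
    exact hcont e he
  choose! T hT e he using hcomp
  have hHU : ∀ U ∈ complComponents K₁, ContinuousOn H (closure U) :=
    fun U hU => hcont (e U hU) (he U hU)
  have hHT : ∀ U ∈ complComponents K₁, H '' closure U = closure (T U) :=
    fun U hU => himg (e U hU) (he U hU)
  have hTinj : InjOn T (complComponents K₁) := fun U hU V hV h => by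
    refine complComponents_closure_inj h₁compact.isClosed hU hV (hbij.1.image_injective ?_)
    rw [hHT U hU, hHT V hV, h]
  -- continuity along a closed set, in a form that holds vacuously at points outside it
  have hpiece : ∀ A : Set S2, IsClosed A → ContinuousOn H A → ∀ x, ∀ V ∈ 𝓝 (H x),
      ∀ᶠ y in 𝓝 x, y ∈ A → H y ∈ V := by
    intro A hA hHA x V hV
    by_cases hx : x ∈ A
    · exact eventually_nhdsWithin_iff.1 (hHA x hx hV)
    · filter_upwards [hA.isOpen_compl.mem_nhds hx] with y hy hyA using absurd hyA hy
  have hHcont : Continuous H := by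
    rw [continuous_iff_continuousAt]
    intro x
    by_cases hxK : x ∈ K₁
    swap
    · have hU : connectedComponentIn K₁ᶜ x ∈ complComponents K₁ := ⟨x, hxK, rfl⟩
      exact (hHU _ hU).continuousAt (mem_of_superset
        ((complComponents_isOpen h₁compact.isClosed hU).mem_nhds (mem_connectedComponentIn hxK))
        subset_closure)
    refine le_nhds_of_unique_clusterPt fun z hz => ?_
    by_contra hne
    obtain ⟨V₀, hV₀, W₀, hW₀, hfin⟩ := finite_complComponents h₂compact h₂lc (Ne.symm hne)
    obtain ⟨V₁, W₁, hV₁o, hW₁o, hxV₁, hzW₁, hVW⟩ := t2_separation (Ne.symm hne)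
    set V := interior V₀ ∩ V₁ with hV
    set W := interior W₀ ∩ W₁ with hW
    have hVo : IsOpen V := isOpen_interior.inter hV₁o
    have hWo : IsOpen W := isOpen_interior.inter hW₁o
    have hxV : V ∈ 𝓝 (H x) := inter_mem (interior_mem_nhds.2 hV₀) (hV₁o.mem_nhds hxV₁)
    have hzW : W ∈ 𝓝 z := inter_mem (interior_mem_nhds.2 hW₀) (hW₁o.mem_nhds hzW₁)
    have hVWd : ∀ y, y ∈ V → y ∉ W := fun y hy hy' => hVW.notMem_of_mem_left hy.2 hy'.2
    -- the components across which `H` might jump from `H x` to `z`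
    set 𝒰 := {U ∈ complComponents K₁ | (T U ∩ V).Nonempty ∧ (T U ∩ W).Nonempty} with h𝒰
    have h𝒰fin : 𝒰.Finite := by
      refine Finite.of_finite_image (hfin.subset ?_) (hTinj.mono fun U hU => hU.1)
      rintro _ ⟨U, hU, rfl⟩
      exact ⟨hT U hU.1, hU.2.1.mono (inter_subset_inter_right _ fun y hy => interior_subset hy.1),
        hU.2.2.mono (inter_subset_inter_right _ fun y hy => interior_subset hy.1)⟩
    have hKnear := hpiece K₁ h₁compact.isClosed hHK x V hxV
    obtain ⟨N, hNs, hNo, hxN, hNc⟩ :=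
      locallyConnectedSpace_iff_subsets_isOpen_isConnected.1 this x _ hKnear
    have h𝒰near : ∀ᶠ y in 𝓝 x, ∀ U ∈ 𝒰, y ∈ closure U → H y ∈ V :=
      (eventually_all_finite h𝒰fin).2 fun U hU =>
        hpiece _ isClosed_closure (hHU U hU.1) x V hxV
    have hfreq : ∃ᶠ y in 𝓝 x, H y ∈ W := hz.frequently hzW
    obtain ⟨y, hyW, hyN, hy𝒰⟩ := (hfreq.and_eventually ((hNo.eventually_mem hxN).and h𝒰near)).exists
    have hyK : y ∉ K₁ := fun h => hVWd _ (hNs hyN h) hyW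
    set U := connectedComponentIn K₁ᶜ y with hUdef
    have hU : U ∈ complComponents K₁ := ⟨y, hyK, rfl⟩
    have hyU : y ∈ U := mem_connectedComponentIn hyK
    -- `N` is connected and meets both `U` (at `y`) and its complement (at `x`)
    obtain ⟨y', hy'N, hy'U⟩ : (N ∩ frontier U).Nonempty := by
      by_contra hemp
      rw [not_nonempty_iff_eq_empty] at hemp
      have hsub : N ⊆ U := by
        refine hNc.isPreconnected.subset_left_of_subset_union
          (complComponents_isOpen h₁compact.isClosed hU) isClosed_closure.isOpen_compl
          (disjoint_compl_right_iff_subset.2 subset_closure) (fun v hv => ?_) ⟨y, hyN, hyU⟩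
        by_contra hvU
        simp only [mem_union, mem_compl_iff, not_or, not_not] at hvU
        have : v ∈ N ∩ frontier U :=
          ⟨hv, hvU.2, fun h => hvU.1 (interior_subset h)⟩
        simp [hemp] at this
      exact (complComponents_disjoint hU).notMem_of_mem_left (hsub hxN) hxK
    have hU𝒰 : U ∈ 𝒰 := by
      refine ⟨hU, ?_, ?_⟩
      · have h1 : H y' ∈ closure (T U) :=
          hHT U hU ▸ mem_image_of_mem H (frontier_subset_closure hy'U)
        rw [inter_comm]
        exact mem_closure_iff.1 h1 V hVo
          (hNs hy'N (complComponents_frontier h₁compact.isClosed hU hy'U))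
      · have h1 : H y ∈ closure (T U) := hHT U hU ▸ mem_image_of_mem H (subset_closure hyU)
        rw [inter_comm]
        exact mem_closure_iff.1 h1 W hWo hyW
    exact hVWd _ (hy𝒰 U hU𝒰 (subset_closure hyU)) hyW
  have : CompactSpace S2 := isCompact_iff_compactSpace.1 (isCompact_sphere _ _)
  exact isHomeomorph_iff_continuous_bijective.2 ⟨hHcont, hbij⟩
end
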